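/- Fix k ≥ 1 and Δ > Δ_k, and for each n ≥ k let m = ⌈Δ n⌉. Let ψ_FLAT be the test that outputs 1 on an m-tuple V of k-flats iff Z(V) > 0. Then max( P_unif(ψ_FLAT = 1), P_planted(ψ_FLAT = 0) ) → 0 as n → ∞; in fact P_planted(ψ_FLAT = 0) = 0 for every n. -/

import Mathlib

open scoped BigOperators Classical
open Filter Topology

abbrev F2n (n : ℕ) := Fin n → ZMod 2

def IsFlat (n k : ℕ) (W : Set (F2n n)) : Prop :=
  ∃ A : AffineSubspace (ZMod 2) (F2n n),
    (A : Set (F2n n)) = W ∧ W.Nonempty ∧ Module.finrank (ZMod 2) A.direction = n - k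

def Flat (n k : ℕ) : Type := {W : Set (F2n n) // IsFlat n k W}

noncomputable instance (n k : ℕ) : Fintype (Flat n k) := by
  unfold Flat; exact Fintype.ofFinite _

noncomputable def q0 (n k : ℕ) : Flat n k → ℝ :=
  fun _ => (Fintype.card (Flat n k) : ℝ)⁻¹

noncomputable def qx (n k : ℕ) (x : F2n n) : Flat n k → ℝ :=
  fun W => if x ∈ W.1 then 0 else (Nat.card {W : Flat n k // x ∉ W.1} : ℝ)⁻¹

noncomputable def prob {α : Type*} [Fintype α] (p : α → ℝ) (E : Set α) : ℝ :=
  ∑ a, if a ∈ E then p a else 0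

noncomputable def expect {α : Type*} [Fintype α] (p : α → ℝ) (f : α → ℝ) : ℝ :=
  ∑ a, p a * f a

noncomputable def Punif (n k m : ℕ) : (Fin m → Flat n k) → ℝ :=
  fun V => ∏ j, q0 n k (V j)

noncomputable def Pplanted (n k m : ℕ) : (Fin m → Flat n k) → ℝ :=
  fun V => ((2:ℝ)^n)⁻¹ * ∑ x : F2n n, ∏ j, qx n k x (V j)

noncomputable def Z (n k m : ℕ) (V : Fin m → Flat n k) : ℕ :=
  Nat.card {x : F2n n // ∀ j, x ∉ (V j).1}

noncomputable def satCount (n k m : ℕ) (V : Fin m → Flat n k) (x : F2n n) : ℕ :=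
  Nat.card {j : Fin m // x ∉ (V j).1}

noncomputable def maxSat (n k m : ℕ) (V : Fin m → Flat n k) : ℕ :=
  Finset.univ.sup (fun x : F2n n => satCount n k m V x)

noncomputable def qxpi (n k : ℕ) (x : F2n n) (π : ℝ) : Flat n k → ℝ :=
  fun W => (1 - π) * q0 n k W + π * qx n k x W

noncomputable def Pplantedpi (n k m : ℕ) (π : ℝ) : (Fin m → Flat n k) → ℝ :=
  fun V => ((2:ℝ)^n)⁻¹ * ∑ x : F2n n, ∏ j, qxpi n k x π (V j)

noncomputable def DeltaK (k : ℕ) : ℝ :=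
  Real.log (1/2) / Real.log (1 - ((2:ℝ)^k)⁻¹)

/-!
First moment method: `Z V` is the number of points missed by every flat of `V`. A uniform `k`-flat
misses a given point with probability `1 - 2⁻ᵏ`, since it contains a `2⁻ᵏ` fraction of the points
and translations make all points equally likely. Hence `𝔼 Z = 2ⁿ (1 - 2⁻ᵏ)ᵐ` under the uniform law,
which by Markov's inequality bounds the probability that `Z > 0`. For `m = ⌈Δ n⌉` it is at most
`(2 (1 - 2⁻ᵏ) ^ Δ)ⁿ`, and `Δ_k` is the value of `Δ` at which the base of this power equals `1`.
Under the planted law the planted point is missed by all the flats, so `Z > 0` always.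
-/

section FiniteProbability

variable {α β : Type*} [Fintype α] [Fintype β]

lemma prob_nonneg {p : α → ℝ} (hp : ∀ a, 0 ≤ p a) (E : Set α) : 0 ≤ prob p E :=
  Finset.sum_nonneg fun a _ => ite_nonneg (hp a) le_rfl

lemma prob_eq_zero {p : α → ℝ} {E : Set α} (h : ∀ a ∈ E, p a = 0) : prob p E = 0 :=
  Finset.sum_eq_zero fun a _ => ite_eq_right_iff.2 (h a)

lemma prob_compl (p : α → ℝ) (E : Set α) : prob p Eᶜ = ∑ a, p a - prob p E := by
  rw [eq_sub_iff_add_eq, prob, prob, ← Finset.sum_add_distrib]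
  exact Finset.sum_congr rfl fun a _ => by by_cases ha : a ∈ E <;> simp [ha]

lemma prob_pi {ι : Type*} [Fintype ι] [DecidableEq ι] {γ : ι → Type*} [∀ i, Fintype (γ i)]
    (p : ∀ i, γ i → ℝ) (E : ∀ i, Set (γ i)) :
    prob (fun V : ∀ i, γ i => ∏ i, p i (V i)) {V | ∀ i, V i ∈ E i} = ∏ i, prob (p i) (E i) := by
  simp only [prob, Set.mem_ofPred_eq, Finset.prod_univ_sum, Finset.prod_ite_zero,
    Fintype.piFinset_univ, Finset.mem_univ, true_imp_iff]

lemma prob_pos_le_expect {p : α → ℝ} (hp : ∀ a, 0 ≤ p a) (f : α → ℕ) :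
    prob p {a | 0 < f a} ≤ expect p (fun a => f a) := by
  refine Finset.sum_le_sum fun a _ => ?_
  split_ifs with ha
  · exact le_mul_of_one_le_right (hp a) (Nat.one_le_cast.2 ha)
  · exact mul_nonneg (hp a) (Nat.cast_nonneg _)

lemma expect_natCard_eq_sum_prob (p : β → ℝ) (r : α → β → Prop) :
    expect p (fun b => (Nat.card {a // r a b} : ℝ)) = ∑ a, prob p {b | r a b} := by
  simp only [expect, prob, Set.mem_ofPred_eq]
  rw [Finset.sum_comm]
  refine Finset.sum_congr rfl fun b _ => ?_
  simp [← Finset.sum_filter, Nat.card_eq_fintype_card, Fintype.card_subtype, mul_comm]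

lemma prob_rel_eq_of_isPretransitive (G : Type*) {X : Type*} [AddGroup G] [AddAction G X]
    [AddAction G β] [AddAction.IsPretransitive G X] {p : β → ℝ} {r : X → β → Prop}
    (hp : ∀ (g : G) b, p (g +ᵥ b) = p b) (hr : ∀ (g : G) x b, r (g +ᵥ x) (g +ᵥ b) ↔ r x b)
    (x y : X) : prob p {b | r x b} = prob p {b | r y b} := by
  obtain ⟨g, rfl⟩ := AddAction.exists_vadd_eq G x y
  refine Fintype.sum_equiv (AddAction.toPerm g) _ _ fun b => ?_
  simp only [AddAction.toPerm_apply, Set.mem_ofPred_eq, hp, hr]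

end FiniteProbability

lemma natCard_affineSubspace {K V P : Type*} [Field K] [Finite K] [AddCommGroup V] [Module K V]
    [FiniteDimensional K V] [AddTorsor V P] (A : AffineSubspace K P) [Nonempty A] :
    Nat.card A = Nat.card K ^ Module.finrank K A.direction := by
  rw [← Module.natCard_eq_pow_finrank]
  exact (Nat.card_congr (Equiv.vaddConst (Classical.arbitrary A))).symm

section Flats

variable {n k : ℕ}

open scoped Pointwise in
lemma IsFlat.vadd {W : Set (F2n n)} (h : IsFlat n k W) (v : F2n n) : IsFlat n k (v +ᵥ W) := by
  obtain ⟨A, rfl, hne, hd⟩ := h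
  refine ⟨v +ᵥ A, AffineSubspace.coe_pointwise_vadd v A, hne.vadd_set, ?_⟩
  rw [AffineSubspace.pointwise_vadd_direction, hd]

lemma IsFlat.natCard_eq {W : Set (F2n n)} (h : IsFlat n k W) : Nat.card W = 2 ^ (n - k) := by
  obtain ⟨A, rfl, hne, hd⟩ := h
  have : Nonempty A := hne.to_subtype
  simpa [hd] using natCard_affineSubspace A

open scoped Pointwise in
/-- The action of `F_2^n` on its `k`-flats by translation. -/
instance : AddAction (F2n n) (Flat n k) where
  vadd v W := ⟨v +ᵥ W.1, W.2.vadd v⟩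
  zero_vadd W := Subtype.ext (zero_vadd _ W.1)
  add_vadd v w W := Subtype.ext (add_vadd v w W.1)

lemma Flat.vadd_mem_vadd_iff (v x : F2n n) (W : Flat n k) : v +ᵥ x ∈ (v +ᵥ W).1 ↔ x ∈ W.1 :=
  Set.vadd_mem_vadd_set_iff

instance : Nonempty (Flat n k) := by
  have hn : n - k ≤ Module.finrank (ZMod 2) (F2n n) := by simp
  obtain ⟨b, hb⟩ := exists_linearIndependent_of_le_finrank hn
  refine ⟨_, (Submodule.span (ZMod 2) (Set.range b)).toAffineSubspace, rfl,
    ⟨0, Submodule.zero_mem _⟩, ?_⟩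
  rw [Submodule.toAffineSubspace_direction, finrank_span_eq_card hb, Fintype.card_fin]

lemma q0_nonneg (W : Flat n k) : 0 ≤ q0 n k W :=
  inv_nonneg.2 (Nat.cast_nonneg _)

lemma sum_q0 : ∑ W, q0 n k W = 1 := by
  simp [q0]

lemma prob_q0_mem_eq (x y : F2n n) :
    prob (q0 n k) {W | x ∈ W.1} = prob (q0 n k) {W | y ∈ W.1} :=
  prob_rel_eq_of_isPretransitive (F2n n) (r := fun x (W : Flat n k) => x ∈ W.1)
    (fun _ _ => rfl) Flat.vadd_mem_vadd_iff x y

lemma prob_q0_mem (hkn : k ≤ n) (x : F2n n) : prob (q0 n k) {W | x ∈ W.1} = ((2 : ℝ) ^ k)⁻¹ := by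
  have hcount : (2 : ℝ) ^ (n - k) = 2 ^ n * prob (q0 n k) {W | x ∈ W.1} :=
    calc (2 : ℝ) ^ (n - k)
      _ = expect (q0 n k) (fun W => (Nat.card W.1 : ℝ)) := by
        simp only [expect, fun W : Flat n k => W.2.natCard_eq, Nat.cast_pow, Nat.cast_ofNat,
          ← Finset.sum_mul, sum_q0, one_mul]
      _ = ∑ y : F2n n, prob (q0 n k) {W | y ∈ W.1} :=
        expect_natCard_eq_sum_prob (q0 n k) fun (y : F2n n) W => y ∈ W.1
      _ = ∑ _y : F2n n, prob (q0 n k) {W | x ∈ W.1} :=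
        Finset.sum_congr rfl fun y _ => prob_q0_mem_eq y x
      _ = 2 ^ n * prob (q0 n k) {W | x ∈ W.1} := by simp
  rw [pow_sub₀ _ two_ne_zero hkn] at hcount
  exact (mul_left_cancel₀ (by positivity) hcount).symm

lemma prob_q0_notMem (hkn : k ≤ n) (x : F2n n) :
    prob (q0 n k) {W | x ∉ W.1} = 1 - ((2 : ℝ) ^ k)⁻¹ := by
  rw [← Set.compl_ofPred, prob_compl, sum_q0, prob_q0_mem hkn]

lemma Punif_nonneg {m : ℕ} (V : Fin m → Flat n k) : 0 ≤ Punif n k m V :=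
  Finset.prod_nonneg fun j _ => q0_nonneg (V j)

lemma prob_Punif_forall_mem (m : ℕ) (E : Set (Flat n k)) :
    prob (Punif n k m) {V | ∀ j, V j ∈ E} = prob (q0 n k) E ^ m := by
  unfold Punif
  rw [prob_pi (fun _ => q0 n k) fun _ => E, Fin.prod_const]

lemma expect_Punif_Z (hkn : k ≤ n) (m : ℕ) :
    expect (Punif n k m) (fun V => (Z n k m V : ℝ)) = 2 ^ n * (1 - ((2 : ℝ) ^ k)⁻¹) ^ m :=
  calc expect (Punif n k m) (fun V => (Z n k m V : ℝ))
    _ = ∑ x : F2n n, prob (Punif n k m) {V | ∀ j, x ∉ (V j).1} :=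
      expect_natCard_eq_sum_prob (Punif n k m) fun (x : F2n n) V => ∀ j, x ∉ (V j).1
    _ = ∑ x : F2n n, prob (q0 n k) {W | x ∉ W.1} ^ m :=
      Finset.sum_congr rfl fun x _ => prob_Punif_forall_mem m {W | x ∉ W.1}
    _ = 2 ^ n * (1 - ((2 : ℝ) ^ k)⁻¹) ^ m := by simp [prob_q0_notMem hkn]

lemma prob_Punif_Z_pos_le (hkn : k ≤ n) (m : ℕ) :
    prob (Punif n k m) {V | 0 < Z n k m V} ≤ 2 ^ n * (1 - ((2 : ℝ) ^ k)⁻¹) ^ m :=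
  (prob_pos_le_expect Punif_nonneg _).trans_eq (expect_Punif_Z hkn m)

lemma qx_of_mem {x : F2n n} {W : Flat n k} (hx : x ∈ W.1) : qx n k x W = 0 :=
  if_pos hx

lemma Z_pos_iff {m : ℕ} {V : Fin m → Flat n k} : 0 < Z n k m V ↔ ∃ x, ∀ j, x ∉ (V j).1 := by
  rw [Z, Nat.card_pos_iff, nonempty_subtype]
  exact and_iff_left Subtype.finite

lemma prob_Pplanted_not_Z_pos (m : ℕ) : prob (Pplanted n k m) {V | ¬ 0 < Z n k m V} = 0 := by
  refine prob_eq_zero fun V hV => ?_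
  have hcover : ∀ x, ∃ j, x ∈ (V j).1 := by simpa [Z_pos_iff] using hV
  refine mul_eq_zero_of_right _ (Finset.sum_eq_zero fun x _ => ?_)
  obtain ⟨j, hj⟩ := hcover x
  exact Finset.prod_eq_zero (Finset.mem_univ j) (qx_of_mem hj)

end Flats

lemma mul_rpow_lt_one_of_logb_inv_lt {b r Δ : ℝ} (hb : 0 < b) (hr₀ : 0 < r) (hr₁ : r < 1)
    (hΔ : Real.logb r b⁻¹ < Δ) : b * r ^ Δ < 1 := by
  rwa [Real.logb_lt_iff_lt_rpow_of_base_lt_one hr₀ hr₁ (inv_pos.2 hb), ← one_div,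
    lt_div_iff₀' hb] at hΔ

lemma tendsto_pow_mul_pow_natCeil {b r Δ : ℝ} (hb : 0 ≤ b) (hr₀ : 0 < r) (hr₁ : r ≤ 1)
    (h : b * r ^ Δ < 1) :
    Tendsto (fun n : ℕ => b ^ n * r ^ ⌈Δ * (n : ℝ)⌉₊) atTop (𝓝 0) := by
  have hle (n : ℕ) : b ^ n * r ^ ⌈Δ * (n : ℝ)⌉₊ ≤ (b * r ^ Δ) ^ n :=
    calc b ^ n * r ^ ⌈Δ * (n : ℝ)⌉₊
      _ = b ^ n * r ^ (⌈Δ * (n : ℝ)⌉₊ : ℝ) := by rw [Real.rpow_natCast]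
      _ ≤ b ^ n * r ^ (Δ * n) := by
        gcongr _ * ?_
        exact Real.rpow_le_rpow_of_exponent_ge hr₀ hr₁ (Nat.le_ceil _)
      _ = (b * r ^ Δ) ^ n := by rw [Real.rpow_mul_natCast hr₀.le, mul_pow]
  exact squeeze_zero (fun n => by positivity) hle
    (tendsto_pow_atTop_nhds_zero_of_lt_one (by positivity) h)

theorem stmt9 (k : ℕ) (hk : 1 ≤ k) (Δ : ℝ) (hΔk : DeltaK k < Δ) :
    Tendsto (fun n : ℕ =>
        max (prob (Punif n k ⌈Δ * (n:ℝ)⌉₊) {V | 0 < Z n k ⌈Δ * (n:ℝ)⌉₊ V})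
            (prob (Pplanted n k ⌈Δ * (n:ℝ)⌉₊) {V | ¬ 0 < Z n k ⌈Δ * (n:ℝ)⌉₊ V}))
      atTop (nhds 0)
    ∧ ∀ n : ℕ, k ≤ n →
        prob (Pplanted n k ⌈Δ * (n:ℝ)⌉₊) {V | ¬ 0 < Z n k ⌈Δ * (n:ℝ)⌉₊ V} = 0 := by
  refine ⟨?_, fun n _ => prob_Pplanted_not_Z_pos _⟩
  have hr₀ : 0 < 1 - ((2 : ℝ) ^ k)⁻¹ :=
    sub_pos.2 (inv_lt_one_of_one_lt₀ (one_lt_pow₀ one_lt_two (Nat.one_le_iff_ne_zero.1 hk)))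
  have hr₁ : 1 - ((2 : ℝ) ^ k)⁻¹ < 1 := sub_lt_self _ (by positivity)
  have hbase : 2 * (1 - ((2 : ℝ) ^ k)⁻¹) ^ Δ < 1 :=
    mul_rpow_lt_one_of_logb_inv_lt two_pos hr₀ hr₁ (by rwa [inv_eq_one_div 2])
  simp only [prob_Pplanted_not_Z_pos, max_eq_left (prob_nonneg Punif_nonneg _)]
  refine squeeze_zero' (.of_forall fun n => prob_nonneg Punif_nonneg _) ?_
    (tendsto_pow_mul_pow_natCeil zero_le_two hr₀ hr₁.le hbase)
  filter_upwards [eventually_ge_atTop k] with n hkn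
  exact prob_Punif_Z_pos_le hkn _
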